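/- For every c with 1 ≤ c < 3 there exist a uniformly discrete pointed metric space (M,d,0) and a sequence (μ_n) of finitely supported functions μ_n : M → ℝ with sup_n ‖μ_n‖ < ∞ (free norm) such that ca(μ_n) > c·de(μ_n). (That is, the constant 3 in the statement 'F(M) is 3-Schur for uniformly discrete M' is optimal.) -/

import Mathlib

open scoped BigOperators

/-- The free norm of a finitely supported function `μ : M → ℝ` over a pointed metric
space `(M, z)`. -/
noncomputable def freeNorm {M : Type*} [MetricSpace M] (z : M) (μ : M →₀ ℝ) : ℝ :=
  sSup {s | ∃ f : M → ℝ, f z = 0 ∧ LipschitzWith 1 f ∧ s = ∑ x ∈ μ.support, μ x * f x}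

/-- `ca(μ_n) = inf_n sup {‖μ_k - μ_l‖ : k, l ≥ n}` computed with the free norm. -/
noncomputable def seqCa {M : Type*} [MetricSpace M] (z : M) (μ : ℕ → M →₀ ℝ) : ℝ :=
  sInf {t | ∃ n : ℕ, t = sSup {s | ∃ k, n ≤ k ∧ ∃ l, n ≤ l ∧ s = freeNorm z (μ k - μ l)}}

/-- `de(μ_n) = sup_f inf_n sup {|⟨μ_k - μ_l, f⟩| : k, l ≥ n}` over `1`-Lipschitz `f`
vanishing at the base point. -/
noncomputable def seqDe {M : Type*} [MetricSpace M] (z : M) (μ : ℕ → M →₀ ℝ) : ℝ :=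
  sSup {t | ∃ f : M → ℝ, f z = 0 ∧ LipschitzWith 1 f ∧
    t = sInf {u | ∃ n : ℕ, u = sSup {s | ∃ k, n ≤ k ∧ ∃ l, n ≤ l ∧
      s = |∑ x ∈ (μ k - μ l).support, (μ k - μ l) x * f x|}}}

/-
A word over a finite alphabet `A` determines a source and a sink. The space carries the path metric
of the graph that joins the base point to all sinks, and a source to the sinks of the proper
extensions of its word with the same last letter. The `n`-th measure is uniform on the sources minus
uniform on the sinks of the words of length `n + 1`.

For a `1`-Lipschitz `f`, let `S w` be the sum over the letters `c` of the largest value of `f` at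
the base point and the sources of initial segments of `w` ending in `c`. Appending a letter to `w`
increases `S` by at least the difference of `f` between the new source and the new sink, minus one.
As `S` is monotone and bounded, the increments of its averages tend to `0`, so the integrals of `f`
against the sequence are asymptotically at most `1`, and `de ≤ 2`. On the other hand, for `k < l`
only a fraction `1 / |A|` of the sources of level `l` has a neighbour in common with a source of
level `k`, so a `1`-Lipschitz function can have integral `3` against the measure of level `k` and
nearly `-3` against that of level `l`: this gives `ca ≥ 6 - 2 / |A|`.
-/

open Filter Finset Topology

section FreeNorm

theorem sum_support_mul_eq_linearCombination {α : Type*} (f : α → ℝ) (μ : α →₀ ℝ) :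
    ∑ x ∈ μ.support, μ x * f x = Finsupp.linearCombination ℝ f μ := by
  simp only [Finsupp.linearCombination_apply, Finsupp.sum, smul_eq_mul]

theorem linearCombination_neg_left {α : Type*} (f : α → ℝ) (μ : α →₀ ℝ) :
    Finsupp.linearCombination ℝ (-f) μ = -Finsupp.linearCombination ℝ f μ := by
  simp only [← sum_support_mul_eq_linearCombination, Pi.neg_apply, mul_neg, sum_neg_distrib]

variable {M : Type*} [MetricSpace M] {z : M}

theorem freeNorm_le {μ : M →₀ ℝ} {C : ℝ}
    (h : ∀ f : M → ℝ, f z = 0 → LipschitzWith 1 f → Finsupp.linearCombination ℝ f μ ≤ C) :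
    freeNorm z μ ≤ C := by
  refine csSup_le ⟨_, 0, rfl, LipschitzWith.const' 0, rfl⟩ ?_
  rintro s ⟨f, hz, hf, rfl⟩
  exact (sum_support_mul_eq_linearCombination f μ).trans_le (h f hz hf)

theorem linearCombination_le_freeNorm (μ : M →₀ ℝ) {f : M → ℝ} (hz : f z = 0)
    (hf : LipschitzWith 1 f) : Finsupp.linearCombination ℝ f μ ≤ freeNorm z μ := by
  refine le_csSup ⟨∑ x ∈ μ.support, |μ x| * dist x z, ?_⟩
    ⟨f, hz, hf, (sum_support_mul_eq_linearCombination f μ).symm⟩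
  rintro s ⟨g, hgz, hg, rfl⟩
  refine sum_le_sum fun x _ => ?_
  have hgx : |g x| ≤ dist x z := by simpa [hgz, Real.dist_eq] using hg.dist_le_mul x z
  calc μ x * g x ≤ |μ x| * |g x| := (le_abs_self _).trans (abs_mul _ _).le
    _ ≤ |μ x| * dist x z := by gcongr

theorem freeNorm_sub_le (μ ν : M →₀ ℝ) : freeNorm z (μ - ν) ≤ freeNorm z μ + freeNorm z ν := by
  refine freeNorm_le fun f hz hf => ?_
  rw [map_sub, sub_eq_add_neg, ← linearCombination_neg_left]
  exact add_le_add (linearCombination_le_freeNorm μ hz hf)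
    (linearCombination_le_freeNorm ν (by simp [hz]) hf.neg)

theorem seqDe_le_two_mul {μ : ℕ → M →₀ ℝ} {C : ℝ}
    (h : ∀ f : M → ℝ, f z = 0 → LipschitzWith 1 f → ∀ ε > 0,
      ∀ᶠ n in atTop, |Finsupp.linearCombination ℝ f (μ n)| ≤ C + ε) :
    seqDe z μ ≤ 2 * C := by
  refine csSup_le ⟨_, 0, rfl, LipschitzWith.const' 0, rfl⟩ ?_
  rintro t ⟨f, hz, hf, rfl⟩
  refine le_of_forall_pos_le_add fun ε hε => ?_
  obtain ⟨N, hN⟩ := eventually_atTop.1 (h f hz hf (ε / 2) (half_pos hε))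
  refine (csInf_le ⟨0, ?_⟩ (Set.mem_ofPred.2 ⟨N, rfl⟩)).trans ?_
  · rintro u ⟨n, rfl⟩
    refine Real.sSup_nonneg ?_
    rintro s ⟨k, _, l, _, rfl⟩
    exact abs_nonneg _
  · refine csSup_le ⟨_, N, le_rfl, N, le_rfl, rfl⟩ ?_
    rintro s ⟨k, hk, l, hl, rfl⟩
    rw [sum_support_mul_eq_linearCombination, map_sub]
    linarith [abs_sub (Finsupp.linearCombination ℝ f (μ k)) (Finsupp.linearCombination ℝ f (μ l)),
      hN k hk, hN l hl]

theorem le_seqCa {μ : ℕ → M →₀ ℝ} {B C : ℝ} (hB : ∀ n, freeNorm z (μ n) ≤ B)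
    (hC : ∀ n, ∃ k ≥ n, ∃ l ≥ n, C ≤ freeNorm z (μ k - μ l)) : C ≤ seqCa z μ := by
  refine le_csInf ⟨_, 0, rfl⟩ ?_
  rintro t ⟨n, rfl⟩
  obtain ⟨k, hk, l, hl, hkl⟩ := hC n
  refine hkl.trans (le_csSup ⟨B + B, ?_⟩ ⟨k, hk, l, hl, rfl⟩)
  rintro s ⟨i, _, j, _, rfl⟩
  exact (freeNorm_sub_le _ _).trans (add_le_add (hB i) (hB j))

end FreeNorm

section PathMetric

variable {V : Type*} {G : SimpleGraph V}

/-- The path metric on the vertices of a connected graph. -/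
noncomputable abbrev pathMetricSpace (G : SimpleGraph V) (hG : G.Connected) : MetricSpace V where
  dist u v := G.dist u v
  dist_self u := by simp
  dist_comm u v := by simp only [SimpleGraph.dist_comm]
  dist_triangle u v w := mod_cast hG.dist_triangle
  eq_of_dist_eq_zero h := hG.dist_eq_zero_iff.1 (mod_cast h)

theorem one_le_dist_of_ne (hG : G.Connected) {u v : V} (huv : u ≠ v) :
    letI := pathMetricSpace G hG
    1 ≤ dist u v :=
  Nat.one_le_cast.2 (hG.pos_dist_of_ne huv)

theorem le_add_length_of_forall_adj {f : V → ℝ} (hf : ∀ ⦃u v⦄, G.Adj u v → f u ≤ f v + 1)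
    {u v : V} (p : G.Walk u v) : f u ≤ f v + p.length := by
  induction p with
  | nil => simp
  | cons huv p ih =>
    rw [SimpleGraph.Walk.length_cons, Nat.cast_succ]
    linarith [hf huv]

theorem lipschitzWith_one_iff_forall_adj (hG : G.Connected) {f : V → ℝ} :
    letI := pathMetricSpace G hG
    LipschitzWith 1 f ↔ ∀ ⦃u v⦄, G.Adj u v → f u ≤ f v + 1 := by
  let := pathMetricSpace G hG
  have dist_eq (u v : V) : dist u v = G.dist u v := rfl
  refine ⟨fun hf u v huv => ?_, fun hf => LipschitzWith.of_le_add fun u v => ?_⟩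
  · simpa [dist_eq, SimpleGraph.dist_eq_one_iff_adj.2 huv] using hf.le_add_mul u v
  · obtain ⟨p, hp⟩ := hG.exists_walk_length_eq_dist u v
    rw [dist_eq, ← hp]
    exact le_add_length_of_forall_adj hf p

end PathMetric

section WordMean

variable {A V : Type*} [Fintype A]

/-- The average of `g` over all words of length `n` in the alphabet `A`. -/
noncomputable def wordMean [AddCommMonoid V] [Module ℚ≥0 V] (n : ℕ) (g : List A → V) : V :=
  𝔼 w : Fin n → A, g (List.ofFn w)

theorem wordMean_succ [AddCommMonoid V] [Module ℚ≥0 V] (n : ℕ) (g : List A → V) :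
    wordMean (n + 1) g = wordMean n fun w => 𝔼 a, g (a :: w) := by
  simp only [wordMean]
  rw [expect_comm, ← expect_product']
  refine (Fintype.expect_equiv (Fin.consEquiv fun _ => A) _ _ fun p => ?_).symm
  simp [Fin.consEquiv]

theorem wordMean_congr [AddCommMonoid V] [Module ℚ≥0 V] {n : ℕ} {g h : List A → V}
    (hgh : ∀ w, w.length = n → g w = h w) : wordMean n g = wordMean n h :=
  expect_congr rfl fun _ _ => hgh _ List.length_ofFn

theorem wordMean_const [AddCommMonoid V] [Module ℚ≥0 V] [Nonempty A] (n : ℕ) (b : V) :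
    wordMean n (fun _ : List A => b) = b :=
  Fintype.expect_const b

theorem wordMean_mono {n : ℕ} {g h : List A → ℝ} (hgh : ∀ w, g w ≤ h w) :
    wordMean n g ≤ wordMean n h :=
  expect_le_expect fun _ _ => hgh _

theorem wordMean_le [Nonempty A] {n : ℕ} {g : List A → ℝ} {B : ℝ} (hg : ∀ w, g w ≤ B) :
    wordMean n g ≤ B :=
  expect_le univ_nonempty fun _ _ => hg _

theorem tendsto_wordMean_succ_sub_wordMean [Nonempty A] {S : List A → ℝ} {B : ℝ}
    (hmono : ∀ a w, S w ≤ S (a :: w)) (hB : ∀ w, S w ≤ B) :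
    Tendsto (fun n => wordMean (n + 1) S - wordMean n S) atTop (𝓝 0) := by
  have hmean : Monotone fun n => wordMean n S := monotone_nat_of_le_succ fun n => by
    rw [wordMean_succ]
    exact wordMean_mono fun w => le_expect univ_nonempty fun a _ => hmono a w
  have hlim := tendsto_atTop_ciSup hmean
    ⟨B, Set.forall_mem_range.2 fun _ => wordMean_le hB⟩
  simpa using (hlim.comp (tendsto_add_atTop_nat 1)).sub hlim

end WordMean

/-- The vertices of the word graph over the alphabet `A`: a base point and, for every nonempty word,
a source and a sink. The words are split into their last letter `a` and the list `w` of the earlier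
letters, latest first, so that `a :: w <:+ v` means that the word of `v` properly extends that
of `(w, a)`. -/
inductive WordVertex (A : Type*)
  | base
  | source (w : List A) (a : A)
  | sink (w : List A) (a : A)

namespace WordVertex

variable {A : Type*}

/-- The oriented edges of the word graph: the base point is joined to every sink, and a source is
joined to the sinks of all proper extensions of its word that end in the same letter. -/
inductive Edge : WordVertex A → WordVertex A → Prop
  | base_sink (w : List A) (a : A) : Edge base (sink w a)
  | source_sink {w v : List A} {a : A} (hwv : a :: w <:+ v) : Edge (source w a) (sink v a)

/-- The word graph, whose path metric is the metric space of the counterexample. -/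
def wordGraph (A : Type*) : SimpleGraph (WordVertex A) :=
  SimpleGraph.fromRel Edge

theorem Edge.adj {u v : WordVertex A} (h : Edge u v) : (wordGraph A).Adj u v :=
  (SimpleGraph.fromRel_adj Edge _ _).2 ⟨(by rintro rfl; cases h), Or.inl h⟩

theorem wordGraph_connected : (wordGraph A).Connected := by
  have hsink (w : List A) (a : A) : (wordGraph A).Reachable base (sink w a) :=
    (Edge.base_sink w a).adj.reachable
  refine SimpleGraph.connected_iff_exists_forall_reachable _ |>.2 ⟨base, ?_⟩
  rintro (_ | ⟨w, a⟩ | ⟨w, a⟩)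
  · exact .rfl
  · exact (hsink (a :: w) a).trans (Edge.source_sink List.suffix_rfl).adj.reachable.symm
  · exact hsink w a

noncomputable instance : MetricSpace (WordVertex A) :=
  pathMetricSpace (wordGraph A) wordGraph_connected

theorem lipschitzWith_one_iff_forall_edge {f : WordVertex A → ℝ} :
    LipschitzWith 1 f ↔ ∀ ⦃u v⦄, Edge u v → |f u - f v| ≤ 1 := by
  refine (lipschitzWith_one_iff_forall_adj wordGraph_connected).trans
    ⟨fun h u v huv => ?_, fun h u v huv => ?_⟩
  · rw [abs_sub_le_iff]
    constructor <;> linarith [h huv.adj, h huv.adj.symm]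
  · obtain ⟨-, huv | hvu⟩ := (SimpleGraph.fromRel_adj Edge _ _).1 huv
    · linarith [(abs_sub_le_iff.1 (h huv)).1]
    · linarith [(abs_sub_le_iff.1 (h hvu)).2]

section LipschitzFunctions

variable {f : WordVertex A → ℝ}

theorem source_le_sink_add_one (hf : LipschitzWith 1 f) {w v : List A} {a : A}
    (hwv : a :: w <:+ v) : f (source w a) ≤ f (sink v a) + 1 := by
  linarith [(abs_sub_le_iff.1 (lipschitzWith_one_iff_forall_edge.1 hf (.source_sink hwv))).1]

theorem base_le_sink_add_one (hf : LipschitzWith 1 f) (w : List A) (a : A) :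
    f base ≤ f (sink w a) + 1 := by
  linarith [(abs_sub_le_iff.1 (lipschitzWith_one_iff_forall_edge.1 hf (.base_sink w a))).1]

theorem sink_le_base_add_one (hf : LipschitzWith 1 f) (w : List A) (a : A) :
    f (sink w a) ≤ f base + 1 := by
  linarith [(abs_sub_le_iff.1 (lipschitzWith_one_iff_forall_edge.1 hf (.base_sink w a))).2]

theorem source_le_base_add_two (hf : LipschitzWith 1 f) (w : List A) (a : A) :
    f (source w a) ≤ f base + 2 := by
  linarith [source_le_sink_add_one hf (List.suffix_refl (a :: w)),
    sink_le_base_add_one hf (a :: w) a]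

end LipschitzFunctions

section LetterMax

variable [DecidableEq A]

/-- `letterMax f w c` is the largest value of `f` at the base point and at the sources of the
initial segments of `w` that end in the letter `c`. -/
noncomputable def letterMax (f : WordVertex A → ℝ) : List A → A → ℝ
  | [] => fun _ => f base
  | a :: w => Function.update (letterMax f w) a (max (letterMax f w a) (f (source w a)))

theorem letterMax_le_letterMax_cons (f : WordVertex A → ℝ) (a : A) (w : List A) :
    letterMax f w ≤ letterMax f (a :: w) :=
  le_update_self_iff.2 (le_max_left _ _)

theorem letterMax_le {f : WordVertex A → ℝ} {B : ℝ} (hbase : f base ≤ B)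
    (hsource : ∀ w a, f (source w a) ≤ B) (w : List A) (c : A) : letterMax f w c ≤ B := by
  induction w with
  | nil => exact hbase
  | cons a w ih =>
    obtain rfl | hca := eq_or_ne c a
    · simpa only [letterMax, Function.update_self] using max_le ih (hsource w c)
    · simpa only [letterMax, Function.update_of_ne hca] using ih

theorem letterMax_le_sink_add_one {f : WordVertex A → ℝ} (hf : LipschitzWith 1 f) {w v : List A}
    (hwv : w <:+ v) (c : A) : letterMax f w c ≤ f (sink v c) + 1 := by
  induction w with
  | nil => exact base_le_sink_add_one hf v c
  | cons a w ih =>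
    have hw := ih ((List.suffix_cons a w).trans hwv)
    obtain rfl | hca := eq_or_ne c a
    · simpa only [letterMax, Function.update_self] using max_le hw (source_le_sink_add_one hf hwv)
    · simpa only [letterMax, Function.update_of_ne hca] using hw

-- Appending the letter `a` changes only the entry of `letterMax` at `a`, which is at most
-- `f (sink w a) + 1` before and at least `f (source w a)` after the change.
theorem source_sub_sink_le [Fintype A] {f : WordVertex A → ℝ} (hf : LipschitzWith 1 f)
    (w : List A) (a : A) :
    f (source w a) - f (sink w a) ≤
      1 + (∑ c, letterMax f (a :: w) c - ∑ c, letterMax f w c) := by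
  have hsum : ∑ c, letterMax f (a :: w) c - ∑ c, letterMax f w c =
      max (letterMax f w a) (f (source w a)) - letterMax f w a := by
    rw [← sum_sub_distrib, sum_eq_single a]
    · simp only [letterMax, Function.update_self]
    · intro c _ hca
      simp only [letterMax, Function.update_of_ne hca, sub_self]
    · simp
  have hsink := letterMax_le_sink_add_one hf (List.suffix_refl w) a
  have hsource := le_max_right (letterMax f w a) (f (source w a))
  linarith

end LetterMax

section LevelMolecule

variable [Fintype A]

/-- The `n`-th term of the sequence: the uniform probability measure on the sources of the words of
length `n + 1` minus the one on their sinks. -/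
noncomputable def levelMolecule (A : Type*) [Fintype A] (n : ℕ) : WordVertex A →₀ ℝ :=
  wordMean n fun w => 𝔼 a, (Finsupp.single (source w a) 1 - Finsupp.single (sink w a) 1)

theorem linearCombination_levelMolecule (f : WordVertex A → ℝ) (n : ℕ) :
    Finsupp.linearCombination ℝ f (levelMolecule A n) =
      wordMean n fun w => 𝔼 a, (f (source w a) - f (sink w a)) := by
  let L := (Finsupp.linearCombination ℝ f).restrictScalars ℚ≥0
  calc L (levelMolecule A n)
      = wordMean n fun w => 𝔼 a,
          L (Finsupp.single (source w a) 1 - Finsupp.single (sink w a) 1) := by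
        simp only [levelMolecule, wordMean, map_expect]
    _ = wordMean n fun w => 𝔼 a, (f (source w a) - f (sink w a)) := by
        simp [L]

variable [Nonempty A]

theorem freeNorm_levelMolecule_le (n : ℕ) : freeNorm base (levelMolecule A n) ≤ 3 := by
  refine freeNorm_le fun f _ hf => ?_
  rw [linearCombination_levelMolecule]
  refine wordMean_le fun w => expect_le univ_nonempty fun a _ => ?_
  linarith [source_le_base_add_two hf w a, base_le_sink_add_one hf w a]

theorem eventually_linearCombination_levelMolecule_le {f : WordVertex A → ℝ}
    (hf : LipschitzWith 1 f) {ε : ℝ} (hε : 0 < ε) :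
    ∀ᶠ n in atTop, Finsupp.linearCombination ℝ f (levelMolecule A n) ≤ 1 + ε := by
  classical
  let S : List A → ℝ := fun w => ∑ c, letterMax f w c
  have hS : Tendsto (fun n => wordMean (n + 1) S - wordMean n S) atTop (𝓝 0) := by
    refine tendsto_wordMean_succ_sub_wordMean (B := ∑ _c : A, (f base + 2))
      (fun a w => sum_le_sum fun c _ => letterMax_le_letterMax_cons f a w c)
      (fun w => sum_le_sum fun c _ => ?_)
    exact letterMax_le (by linarith) (source_le_base_add_two hf) w c
  filter_upwards [hS.eventually_lt_const hε] with n hn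
  calc Finsupp.linearCombination ℝ f (levelMolecule A n)
      = wordMean n fun w => 𝔼 a, (f (source w a) - f (sink w a)) :=
        linearCombination_levelMolecule f n
    _ ≤ wordMean n fun w => 𝔼 a, (1 + (S (a :: w) - S w)) :=
        wordMean_mono fun w => expect_le_expect fun a _ => source_sub_sink_le hf w a
    _ = 1 + (wordMean (n + 1) S - wordMean n S) := by
        rw [wordMean_succ]
        simp only [wordMean, expect_add_distrib, expect_sub_distrib, Fintype.expect_const]
    _ ≤ 1 + ε := by gcongr

theorem seqDe_levelMolecule_le : seqDe base (levelMolecule A) ≤ 2 := by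
  suffices seqDe base (levelMolecule A) ≤ 2 * 1 by rwa [mul_one] at this
  refine seqDe_le_two_mul fun f _ hf ε hε => ?_
  filter_upwards [eventually_linearCombination_levelMolecule_le hf hε,
    eventually_linearCombination_levelMolecule_le hf.neg hε] with n hle hneg_le
  rw [linearCombination_neg_left] at hneg_le
  exact abs_le'.2 ⟨hle, hneg_le⟩

end LevelMolecule

section Separator

variable {k l : ℕ}

theorem getElem?_reverse_of_cons_suffix {w v : List A} {a : A} (hwv : a :: w <:+ v)
    (hk : k < w.length) : v.reverse[k]? = w.reverse[k]? := by
  obtain ⟨t, rfl⟩ := hwv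
  grind

theorem getElem?_reverse_length_of_cons_suffix {w v : List A} {a : A} (hwv : a :: w <:+ v) :
    v.reverse[w.length]? = some a := by
  obtain ⟨t, rfl⟩ := hwv
  simp

section SeparatorValues

variable [DecidableEq A]

/-- A function that nearly attains the free norm of the difference of levels `k < l`. A source of
level `l` cannot get the value `-2` if it shares a sink with a source of level `k`, where the value
is `2`; this happens when the letter at position `k` of its word, which is `w.reverse[k]?` since
letters are listed latest first, equals the last letter `a`. -/
noncomputable def separator (k l : ℕ) : WordVertex A → ℝ
  | base => 0
  | source w a =>
      if w.length = k then 2 else if w.length = l ∧ w.reverse[k]? ≠ some a then -2 else 0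
  | sink w a => if (k < w.length ∧ w.length ≤ l) ∨ w.reverse[k]? = some a then 1 else -1

theorem lipschitzWith_separator (hkl : k < l) :
    LipschitzWith 1 (separator k l : WordVertex A → ℝ) := by
  rw [lipschitzWith_one_iff_forall_edge]
  rintro _ _ (⟨w, a⟩ | @⟨w, v, a, hwv⟩)
  · simp only [separator]
    split_ifs <;> norm_num
  obtain rfl | hk := eq_or_ne w.length k
  · have hv := getElem?_reverse_length_of_cons_suffix hwv
    norm_num [separator, hv]
  by_cases hl : w.length = l ∧ w.reverse[k]? ≠ some a
  · obtain ⟨rfl, ha⟩ := hl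
    have hv : v.reverse[k]? ≠ some a := getElem?_reverse_of_cons_suffix hwv hkl ▸ ha
    have hlen : ¬v.length ≤ w.length := not_le.2 hwv.length_le
    norm_num [separator, hk, ha, hv, hlen]
  · simp only [separator, if_neg hk, if_neg hl]
    split_ifs <;> norm_num

theorem linearCombination_separator_left [Fintype A] [Nonempty A] :
    Finsupp.linearCombination ℝ (separator k l) (levelMolecule A k) = 3 := by
  rw [linearCombination_levelMolecule]
  refine (wordMean_congr fun w hw => ?_).trans (wordMean_const k (3 : ℝ))
  have hk (a : A) : w.reverse[k]? ≠ some a := by simp [hw]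
  simp only [separator, hw, hk, lt_irrefl, false_and, or_self, ↓reduceIte, Fintype.expect_const]
  norm_num

theorem linearCombination_separator_right [Fintype A] [Nonempty A] (hkl : k < l) :
    Finsupp.linearCombination ℝ (separator k l) (levelMolecule A l) =
      2 / Fintype.card A - 3 := by
  rw [linearCombination_levelMolecule]
  refine (wordMean_congr fun w hw => ?_).trans (wordMean_const l _)
  obtain ⟨b, hb⟩ : ∃ b, w.reverse[k]? = some b :=
    ⟨_, List.getElem?_eq_getElem (by simpa [hw] using hkl)⟩
  have hvalue (a : A) : separator k l (source w a) - separator k l (sink w a) =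
      (if b = a then 2 else 0) - 3 := by
    have hletter : w.reverse[k]? = some a ↔ b = a := by rw [hb, Option.some_inj]
    simp only [separator, hw, ne_eq, hletter, hkl, hkl.ne', le_rfl, true_and, true_or, ↓reduceIte]
    split_ifs <;> first | contradiction | norm_num
  simp only [hvalue, expect_sub_distrib, Fintype.expect_const, Fintype.expect_ite_eq]
  simp [NNRat.smul_def, div_eq_inv_mul]

end SeparatorValues

variable [Fintype A] [Nonempty A]

theorem le_freeNorm_levelMolecule_sub (hkl : k < l) :
    6 - 2 / Fintype.card A ≤ freeNorm base (levelMolecule A k - levelMolecule A l) := by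
  classical
  calc (6 - 2 / Fintype.card A : ℝ)
      = Finsupp.linearCombination ℝ (separator k l) (levelMolecule A k - levelMolecule A l) := by
        rw [map_sub, linearCombination_separator_left, linearCombination_separator_right hkl]
        ring
    _ ≤ _ := linearCombination_le_freeNorm _ rfl (lipschitzWith_separator hkl)

theorem le_seqCa_levelMolecule : 6 - 2 / Fintype.card A ≤ seqCa base (levelMolecule A) :=
  le_seqCa freeNorm_levelMolecule_le fun n =>
    ⟨n, le_rfl, n + 1, n.le_succ, le_freeNorm_levelMolecule_sub n.lt_succ_self⟩

end Separator

end WordVertex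

/-- The constant `3` is optimal: for every `1 ≤ c < 3` there is a uniformly discrete
pointed metric space and a bounded sequence in its Lipschitz-free space witnessing
that the space is not `c`-Schur. -/
theorem exists_uniformlyDiscrete_not_cSchur (c : ℝ) (hc1 : 1 ≤ c) (hc3 : c < 3) :
    ∃ (M : Type) (_ : MetricSpace M) (z : M),
      (∃ θ : ℝ, 0 < θ ∧ ∀ x y : M, x ≠ y → θ ≤ dist x y) ∧
      ∃ μ : ℕ → M →₀ ℝ, (∃ C : ℝ, ∀ n, freeNorm z (μ n) ≤ C) ∧
        c * seqDe z μ < seqCa z μ := by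
  obtain ⟨q, hq⟩ := exists_nat_one_div_lt (sub_pos.2 hc3)
  let A := Fin (q + 1)
  have hcard : (2 / Fintype.card A : ℝ) = 2 * (1 / (q + 1)) := by
    simp [A, div_eq_mul_inv]
  refine ⟨WordVertex A, inferInstance, .base,
    ⟨1, one_pos, fun _ _ => one_le_dist_of_ne WordVertex.wordGraph_connected⟩,
    WordVertex.levelMolecule A, ⟨3, WordVertex.freeNorm_levelMolecule_le⟩, ?_⟩
  calc c * seqDe .base (WordVertex.levelMolecule A)
      ≤ c * 2 := by gcongr; exact WordVertex.seqDe_levelMolecule_le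
    _ < 6 - 2 / Fintype.card A := by rw [hcard]; linarith
    _ ≤ seqCa .base (WordVertex.levelMolecule A) := WordVertex.le_seqCa_levelMolecule
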